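/- arXiv:2311.01121 — 2 statements merged into one kernel-verified Lean document; each statement's English description precedes it below -/
import Mathlib

section
/- Let x : ℝ → ℝ² be a C^∞ curve. For every integer m ≥ 2 and every s₀ ∈ ℝ, one has the Taylor expansion ω(x(t) − x(s₀), x'(t)) = Σ_{l=2}^{m} c_l · (t − s₀)^l + o((t − s₀)^m) as t → s₀, where c_l = Σ_{1 ≤ j < h, j + h − 1 = l} ((h − j)/(j!·h!)) · ω(x^{(j)}(s₀), x^{(h)}(s₀)). -/
open Filter
open scoped Topology

/-- The standard area form on the plane: `ω(u,v) = u₁v₂ − u₂v₁`. -/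
noncomputable def om (u v : ℝ × ℝ) : ℝ := u.1 * v.2 - u.2 * v.1

/-!
Write `α j = x^{(j)}(s₀) / j!`. The difference quotient of `x` at `s₀` has Taylor coefficients
`α (i + 1)` and `x'` has Taylor coefficients `(k + 1) • α (k + 1)`. Multiplying the two expansions,
and then by `t - s₀`, shows that the coefficient of `(t - s₀) ^ (n + 1)` is
`∑_{i + k = n} (k + 1) ω(α (i + 1), α (k + 1))`; since `ω` is alternating, the pairs `(i, k)` and
`(k, i)` together contribute `(k - i) ω(α (i + 1), α (k + 1))`. The factor `t - s₀`
compensates the order of expansion lost in passing to `x'`.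
-/

section AntidiagonalSums

open Finset

theorem sum_eq_sum_filter_lt_add_swap {α M : Type*} [LinearOrder α] [AddCommMonoid M]
    {s : Finset (α × α)} {f : α × α → M} (hs : ∀ p ∈ s, p.swap ∈ s)
    (hf : ∀ p ∈ s, p.1 = p.2 → f p = 0) :
    ∑ p ∈ s, f p = ∑ p ∈ s with p.1 < p.2, (f p + f p.swap) := by
  have sum_not_lt : ∑ p ∈ s with ¬ p.1 < p.2, f p = ∑ p ∈ s with p.2 < p.1, f p := by
    refine (sum_subset (fun p hp ↦ ?_) fun p hp hp' ↦ ?_).symm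
    · simp only [mem_filter] at hp ⊢
      exact ⟨hp.1, hp.2.not_gt⟩
    · simp only [mem_filter, not_and, not_lt] at hp hp'
      exact hf p hp.1 (le_antisymm (hp' hp.1) hp.2)
  have sum_gt : ∑ p ∈ s with p.2 < p.1, f p = ∑ p ∈ s with p.1 < p.2, f p.swap := by
    refine sum_nbij' Prod.swap Prod.swap ?_ ?_ ?_ ?_ ?_ <;>
      simp +contextual [Prod.forall.1 hs _ _]
  rw [sum_add_distrib, ← sum_filter_add_sum_filter_not s (fun p ↦ p.1 < p.2), sum_not_lt, sum_gt]

theorem sum_range_product_filter_add_le {M : Type*} [AddCommMonoid M] (n : ℕ) (f : ℕ × ℕ → M) :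
    ∑ p ∈ range (n + 1) ×ˢ range (n + 1) with p.1 + p.2 ≤ n, f p =
      ∑ l ∈ range (n + 1), ∑ p ∈ antidiagonal l, f p := by
  rw [← sum_fiberwise_of_maps_to (t := range (n + 1)) (g := fun p ↦ p.1 + p.2)]
  · refine sum_congr rfl fun l hl ↦ sum_congr ?_ fun _ _ ↦ rfl
    ext p
    simp only [mem_filter, mem_product, mem_range, HasAntidiagonal.mem_antidiagonal] at hl ⊢
    lia
  · intro p hp
    simp only [mem_filter, mem_range] at hp ⊢
    lia

theorem sum_antidiagonal_filter_lt_succ {M : Type*} [AddCommMonoid M] (n : ℕ) (f : ℕ → ℕ → M) :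
    ∑ p ∈ antidiagonal n with p.1 < p.2, f (p.1 + 1) (p.2 + 1) =
      ∑ j ∈ Icc 1 (n + 1) with j < n + 1 + 1 - j, f j (n + 1 + 1 - j) := by
  refine sum_nbij' (fun p ↦ p.1 + 1) (fun j ↦ (j - 1, n + 1 - j)) ?_ ?_ ?_ ?_ ?_
  case refine_5 =>
    intro p hp
    simp only [mem_filter, HasAntidiagonal.mem_antidiagonal] at hp
    congr 1
    lia
  all_goals
    simp only [mem_filter, HasAntidiagonal.mem_antidiagonal, mem_Icc, Prod.forall, Prod.mk.injEq]
    lia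

theorem sum_antidiagonal_weighted_of_alternating {R M N : Type*} [CommRing R] [AddCommGroup M]
    [AddCommGroup N] [Module R M] [Module R N] {B : M →ₗ[R] M →ₗ[R] N} (hB : B.IsAlt)
    (α : ℕ → M) (n : ℕ) :
    ∑ p ∈ antidiagonal n, B (α (p.1 + 1)) (((p.2 + 1 : ℕ) : R) • α (p.2 + 1)) =
      ∑ j ∈ Icc 1 (n + 1) with j < n + 1 + 1 - j,
        ((n + 1 + 1 - j - j : ℕ) : R) • B (α j) (α (n + 1 + 1 - j)) := by
  rw [sum_eq_sum_filter_lt_add_swap,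
    ← sum_antidiagonal_filter_lt_succ n fun j h ↦ ((h - j : ℕ) : R) • B (α j) (α h)]
  · refine sum_congr rfl fun p hp ↦ ?_
    have hlt : p.1 < p.2 := (mem_filter.1 hp).2
    rw [Prod.fst_swap, Prod.snd_swap, map_smul, map_smul, ← hB.neg (α (p.1 + 1)), smul_neg,
      ← sub_eq_add_neg, ← sub_smul, Nat.cast_sub (by lia)]
  · exact fun p hp ↦ HasAntidiagonal.swap_mem_antidiagonal.2 hp
  · intro p _ hp
    rw [hp, map_smul, hB.self_eq_zero, smul_zero]

theorem sum_antidiagonal_inv_factorial_weighted_of_alternating {K M N : Type*} [Field K]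
    [AddCommGroup M] [AddCommGroup N] [Module K M] [Module K N] {B : M →ₗ[K] M →ₗ[K] N}
    (hB : B.IsAlt) (v : ℕ → M) (n : ℕ) :
    ∑ p ∈ antidiagonal n, B (((p.1 + 1).factorial : K)⁻¹ • v (p.1 + 1))
        (((p.2 + 1 : ℕ) : K) • ((p.2 + 1).factorial : K)⁻¹ • v (p.2 + 1)) =
      ∑ j ∈ Icc 1 (n + 1) with j < n + 1 + 1 - j,
        (((n + 1 + 1 - j - j : ℕ) : K) / (j.factorial * (n + 1 + 1 - j).factorial)) •
          B (v j) (v (n + 1 + 1 - j)) := by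
  rw [sum_antidiagonal_weighted_of_alternating hB fun j ↦ (j.factorial : K)⁻¹ • v j]
  simp only [map_smul, LinearMap.smul_apply, smul_smul, div_eq_mul_inv, mul_inv_rev]

theorem sum_range_succ_eq_sum_Icc_two {M : Type*} [AddCommMonoid M] {f : ℕ → M} (n : ℕ)
    (hf : f 1 = 0) : ∑ l ∈ range (n + 1), f (l + 1) = ∑ l ∈ Icc 2 (n + 1), f l := by
  rw [sum_range_succ', hf, add_zero, range_eq_Ico, sum_Ico_add' (fun l ↦ f (l + 1)),
    sum_Ico_add' f]
  rfl

end AntidiagonalSums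

section TaylorExpansion

open Asymptotics Finset

variable {𝕜 E F G : Type*} [NontriviallyNormedField 𝕜]
  [NormedAddCommGroup E] [NormedSpace 𝕜 E] [NormedAddCommGroup F] [NormedSpace 𝕜 F]
  [NormedAddCommGroup G] [NormedSpace 𝕜 G]
  {f : 𝕜 → E} {g : 𝕜 → F} {a : ℕ → E} {b : ℕ → F} {m n : ℕ} {s : 𝕜}

/-- `HasTaylorExpansion f a n s` says that `f` has the order-`n` Taylor expansion (in the sense of
Peano) at `s` with coefficients `a 0, …, a n`: the factorials are absorbed in `a`, and the
values `a i` with `n < i` are irrelevant. -/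
def HasTaylorExpansion (f : 𝕜 → E) (a : ℕ → E) (n : ℕ) (s : 𝕜) : Prop :=
  (fun t ↦ f t - ∑ i ∈ range (n + 1), (t - s) ^ i • a i) =o[𝓝 s] fun t ↦ (t - s) ^ n

theorem isLittleO_sub_pow_smul_const (h : m < n) (c : E) :
    (fun t : 𝕜 ↦ (t - s) ^ n • c) =o[𝓝 s] fun t ↦ (t - s) ^ m := by
  have pow_isLittleO : (fun t : 𝕜 ↦ (t - s) ^ n) =o[𝓝 s] fun t ↦ (t - s) ^ m :=
    (isLittleO_pow_pow h).comp_tendsto (tendsto_sub_nhds_zero_iff.2 tendsto_id)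
  simpa using pow_isLittleO.smul_isBigO (isBigO_const_const c (one_ne_zero' 𝕜) _)

theorem isBigO_sub_pow_one (n : ℕ) (s : 𝕜) :
    (fun t : 𝕜 ↦ (t - s) ^ n) =O[𝓝 s] fun _ ↦ (1 : 𝕜) :=
  (Continuous.tendsto (by fun_prop) s).isBigO_one 𝕜

theorem isBigO_sum_sub_pow_smul_one (a : ℕ → E) (n : ℕ) (s : 𝕜) :
    (fun t : 𝕜 ↦ ∑ i ∈ range n, (t - s) ^ i • a i) =O[𝓝 s] fun _ ↦ (1 : 𝕜) :=
  (Continuous.tendsto (by fun_prop) s).isBigO_one 𝕜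

theorem isLittleO_bilinear_sum_sub_sum_antidiagonal (B : E →L[𝕜] F →L[𝕜] G)
    (a : ℕ → E) (b : ℕ → F) (n : ℕ) (s : 𝕜) :
    (fun t ↦ B (∑ i ∈ range (n + 1), (t - s) ^ i • a i) (∑ k ∈ range (n + 1), (t - s) ^ k • b k) -
      ∑ l ∈ range (n + 1), (t - s) ^ l • ∑ p ∈ antidiagonal l, B (a p.1) (b p.2))
      =o[𝓝 s] fun t ↦ (t - s) ^ n := by
  have high_order : (fun t : 𝕜 ↦ ∑ p ∈ range (n + 1) ×ˢ range (n + 1) with ¬ p.1 + p.2 ≤ n,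
      (t - s) ^ (p.1 + p.2) • B (a p.1) (b p.2)) =o[𝓝 s] fun t ↦ (t - s) ^ n :=
    IsLittleO.fun_sum fun p hp ↦ isLittleO_sub_pow_smul_const (not_le.1 (mem_filter.1 hp).2) _
  refine high_order.congr_left fun t ↦ eq_sub_of_add_eq' ?_
  have low_order : ∑ l ∈ range (n + 1), (t - s) ^ l • ∑ p ∈ antidiagonal l, B (a p.1) (b p.2) =
      ∑ p ∈ range (n + 1) ×ˢ range (n + 1) with p.1 + p.2 ≤ n,
        (t - s) ^ (p.1 + p.2) • B (a p.1) (b p.2) := by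
    rw [sum_range_product_filter_add_le]
    refine sum_congr rfl fun l _ ↦ ?_
    rw [smul_sum]
    exact sum_congr rfl fun p hp ↦ by rw [HasAntidiagonal.mem_antidiagonal.1 hp]
  rw [low_order, sum_filter_add_sum_filter_not, sum_product_right]
  simp only [map_sum, map_smul, _root_.sum_apply, smul_apply, smul_sum, smul_smul,
    pow_add, mul_comm]

namespace HasTaylorExpansion

theorem isBigO_one (hf : HasTaylorExpansion f a n s) : f =O[𝓝 s] fun _ ↦ (1 : 𝕜) := by
  simpa only [sub_add_cancel] using
    (hf.isBigO.trans (isBigO_sub_pow_one n s)).add (isBigO_sum_sub_pow_smul_one a (n + 1) s)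

theorem of_le (hf : HasTaylorExpansion f a n s) (hmn : m ≤ n) : HasTaylorExpansion f a m s := by
  have remainder : (fun t ↦ f t - ∑ i ∈ range (n + 1), (t - s) ^ i • a i)
      =o[𝓝 s] fun t ↦ (t - s) ^ m := by
    obtain rfl | hlt := hmn.eq_or_lt
    · exact hf
    · refine IsLittleO.trans hf ?_
      simpa using isLittleO_sub_pow_smul_const (s := s) hlt (1 : 𝕜)
  have tail : (fun t : 𝕜 ↦ ∑ i ∈ Ico (m + 1) (n + 1), (t - s) ^ i • a i)
      =o[𝓝 s] fun t ↦ (t - s) ^ m :=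
    IsLittleO.fun_sum fun i hi ↦ isLittleO_sub_pow_smul_const (mem_Ico.1 hi).1 (a i)
  refine (remainder.add tail).congr_left fun t ↦ ?_
  rw [← sum_range_add_sum_Ico _ (Nat.succ_le_succ hmn)]
  abel

theorem coeff_zero (hf : HasTaylorExpansion f a n s) : a 0 = f s := by
  have limit : Tendsto (fun t ↦ f t - a 0) (𝓝 s) (𝓝 0) := by
    simpa [HasTaylorExpansion] using hf.of_le n.zero_le
  exact (sub_eq_zero.1 (tendsto_nhds_unique (tendsto_pure_nhds (fun t ↦ f t - a 0) s)
    (limit.mono_left (pure_le_nhds s)))).symm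

theorem hasDerivAt (hf : HasTaylorExpansion f a (n + 1) s) : HasDerivAt f (a 1) s := by
  rw [hasDerivAt_iff_isLittleO, ← hf.coeff_zero]
  simpa [HasTaylorExpansion, sum_range_succ, sub_sub] using hf.of_le (Nat.le_add_left 1 n)

theorem isLittleO_sub_smul (hf : HasTaylorExpansion f a n s) :
    (fun t ↦ (t - s) • f t - ∑ i ∈ range (n + 1), (t - s) ^ (i + 1) • a i)
      =o[𝓝 s] fun t ↦ (t - s) ^ (n + 1) := by
  refine ((isBigO_refl (fun t ↦ t - s) (𝓝 s)).smul_isLittleO hf).congr (fun t ↦ ?_) fun t ↦ ?_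
  · simp only [smul_sub, smul_sum, smul_smul, pow_succ']
  · rw [smul_eq_mul, pow_succ']

theorem dslope (hf : HasTaylorExpansion f a (n + 1) s) :
    HasTaylorExpansion (dslope f s) (fun i ↦ a (i + 1)) n s := by
  have smul_remainder (t : 𝕜) :
      (t - s) • (_root_.dslope f s t - ∑ i ∈ range (n + 1), (t - s) ^ i • a (i + 1)) =
        f t - ∑ i ∈ range (n + 1 + 1), (t - s) ^ i • a i := by
    rw [sum_range_succ' (n := n + 1), smul_sub, sub_smul_dslope, hf.coeff_zero, smul_sum]
    simp only [smul_smul, pow_succ', pow_zero, one_smul]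
    abel
  have remainder_self :
      _root_.dslope f s s - ∑ i ∈ range (n + 1), (s - s) ^ i • a (i + 1) = 0 := by
    simp [sum_range_succ', hf.hasDerivAt.deriv]
  refine isLittleO_iff.2 fun c hc ↦ ?_
  filter_upwards [isLittleO_iff.1 hf hc] with t ht
  obtain rfl | hts := eq_or_ne t s
  · rw [remainder_self, norm_zero]
    positivity
  · rw [← smul_remainder, norm_smul, pow_succ', norm_mul, mul_left_comm] at ht
    exact le_of_mul_le_mul_left ht (norm_pos_iff.2 (sub_ne_zero.2 hts))

theorem bilinear (hf : HasTaylorExpansion f a n s) (hg : HasTaylorExpansion g b n s)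
    (B : E →L[𝕜] F →L[𝕜] G) :
    HasTaylorExpansion (fun t ↦ B (f t) (g t))
      (fun l ↦ ∑ p ∈ antidiagonal l, B (a p.1) (b p.2)) n s := by
  set P : 𝕜 → E := fun t ↦ ∑ i ∈ range (n + 1), (t - s) ^ i • a i with hP
  set Q : 𝕜 → F := fun t ↦ ∑ i ∈ range (n + 1), (t - s) ^ i • b i with hQ
  have left_remainder : (fun t ↦ B (f t - P t) (g t)) =o[𝓝 s] fun t ↦ (t - s) ^ n :=
    (B.isBoundedBilinearMap.isBigO_comp.trans_isLittleO
      (hf.norm_norm.mul_isBigO hg.isBigO_one.norm_norm)).trans_isBigO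
        (isBigO_of_le _ fun t ↦ by simp)
  have right_remainder : (fun t ↦ B (P t) (g t - Q t)) =o[𝓝 s] fun t ↦ (t - s) ^ n :=
    (B.isBoundedBilinearMap.isBigO_comp.trans_isLittleO
      ((isBigO_sum_sub_pow_smul_one a (n + 1) s).norm_norm.mul_isLittleO
        hg.norm_norm)).trans_isBigO (isBigO_of_le _ fun t ↦ by simp)
  refine ((left_remainder.add right_remainder).add
    (isLittleO_bilinear_sum_sub_sum_antidiagonal B a b n s)).congr_left fun t ↦ ?_
  simp only [hP, hQ, map_sub, sub_apply]
  abel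

end HasTaylorExpansion

theorem hasTaylorExpansion_of_contDiffAt {E : Type*} [NormedAddCommGroup E] [NormedSpace ℝ E]
    {f : ℝ → E} {n : ℕ} {s : ℝ} (hf : ContDiffAt ℝ n f s) :
    HasTaylorExpansion f (fun i ↦ (i.factorial : ℝ)⁻¹ • iteratedDeriv i f s) n s := by
  obtain ⟨u, hu, hfu⟩ := hf.contDiffOn le_rfl (by simp)
  obtain ⟨r, hr, hru⟩ := Metric.mem_nhds_iff.1 hu
  have hs : s ∈ Metric.ball s r := Metric.mem_ball_self hr
  have taylor := taylor_isLittleO (convex_ball s r) hs (hfu.mono hru)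
  rw [Metric.isOpen_ball.nhdsWithin_eq hs] at taylor
  refine taylor.congr_left fun t ↦ ?_
  simp only [taylor_within_apply, iteratedDerivWithin_of_isOpen Metric.isOpen_ball hs, smul_smul,
    mul_comm]

theorem hasTaylorExpansion_deriv_of_contDiffAt {E : Type*} [NormedAddCommGroup E]
    [NormedSpace ℝ E] {f : ℝ → E} {n : ℕ} {s : ℝ} (hf : ContDiffAt ℝ (n + 1 : ℕ) f s) :
    HasTaylorExpansion (deriv f)
      (fun k ↦ ((k + 1 : ℕ) : ℝ) • ((k + 1).factorial : ℝ)⁻¹ • iteratedDeriv (k + 1) f s) n s := by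
  have coeff (k : ℕ) : ((k + 1 : ℕ) : ℝ) * ((k + 1).factorial : ℝ)⁻¹ = (k.factorial : ℝ)⁻¹ := by
    rw [Nat.factorial_succ]
    push_cast
    field_simp
  simpa only [smul_smul, coeff, iteratedDeriv_succ'] using
    hasTaylorExpansion_of_contDiffAt (hf.derivWithin (m := n) (by simp))

end TaylorExpansion

/-- The standard area form `om` as a continuous bilinear map. -/
noncomputable def areaForm : ℝ × ℝ →L[ℝ] ℝ × ℝ →L[ℝ] ℝ :=
  (ContinuousLinearMap.mul ℝ ℝ).bilinearComp (.fst ℝ ℝ ℝ) (.snd ℝ ℝ ℝ) -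
    (ContinuousLinearMap.mul ℝ ℝ).bilinearComp (.snd ℝ ℝ ℝ) (.fst ℝ ℝ ℝ)

theorem areaForm_apply (u v : ℝ × ℝ) : areaForm u v = om u v := rfl

theorem areaForm_self (v : ℝ × ℝ) : areaForm v v = 0 := by
  rw [areaForm_apply, om, mul_comm, sub_self]

theorem stmt_1_general {E F : Type*} [NormedAddCommGroup E] [NormedSpace ℝ E]
    [NormedAddCommGroup F] [NormedSpace ℝ F] (B : E →L[ℝ] E →L[ℝ] F) (hB : ∀ v, B v v = 0)
    {x : ℝ → E} {m : ℕ} (hm : 1 ≤ m) {s₀ : ℝ} (hx : ContDiffAt ℝ m x s₀) :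
    (fun t : ℝ ↦ B (x t - x s₀) (deriv x t) -
      ∑ l ∈ Finset.Icc 2 m, (t - s₀) ^ l • ∑ j ∈ Finset.Icc 1 l with j < l + 1 - j,
        ((((l + 1 - j) - j : ℕ) : ℝ) / (Nat.factorial j * Nat.factorial (l + 1 - j))) •
          B (iteratedDeriv j x s₀) (iteratedDeriv (l + 1 - j) x s₀))
      =o[𝓝 s₀] fun t : ℝ ↦ (t - s₀) ^ m := by
  obtain ⟨n, rfl⟩ : ∃ n, m = n + 1 := ⟨m - 1, by lia⟩
  have product := ((hasTaylorExpansion_of_contDiffAt hx).dslope.bilinear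
    (hasTaylorExpansion_deriv_of_contDiffAt hx) B).isLittleO_sub_smul
  refine product.congr_left fun t ↦ ?_
  congr 1
  · rw [← smul_apply, ← map_smul, sub_smul_dslope]
  · rw [← sum_range_succ_eq_sum_Icc_two n (by simp [Finset.filter_singleton])]
    refine Finset.sum_congr rfl fun l _ ↦ ?_
    congr 1
    exact sum_antidiagonal_inv_factorial_weighted_of_alternating (B := B.toLinearMap₁₂) hB
      (fun j ↦ iteratedDeriv j x s₀) l

theorem stmt_1 (x : ℝ → ℝ × ℝ) (hx : ContDiff ℝ (⊤ : ℕ∞) x) (m : ℕ) (hm : 2 ≤ m) (s₀ : ℝ) :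
    (fun t : ℝ => om (x t - x s₀) (deriv x t) -
      ∑ l ∈ Finset.Icc 2 m,
        (∑ j ∈ (Finset.Icc 1 l).filter (fun j => j < l + 1 - j),
          (((l + 1 - j) - j : ℕ) : ℝ) / (Nat.factorial j * Nat.factorial (l + 1 - j)) *
            om (iteratedDeriv j x s₀) (iteratedDeriv (l + 1 - j) x s₀)) * (t - s₀) ^ l)
      =o[𝓝 s₀] fun t : ℝ => (t - s₀) ^ m := by
  simpa only [areaForm_apply, smul_eq_mul, mul_comm (_ ^ _)] using
    stmt_1_general areaForm areaForm_self (le_of_lt hm) (contDiff_infty.1 hx m).contDiffAt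
end

section
/- Let x : ℝ → ℝ² be a C^∞ curve parametrized by affine arc length with affine curvature k. Then for every s₀ ∈ ℝ, as t → s₀: ω(x(t) − x(s₀), x'(t)) = (t−s₀)²/2 − (k(s₀)/24)(t−s₀)⁴ − (3k'(s₀)/120)(t−s₀)⁵ + (k(s₀)²/720 − k''(s₀)/120)(t−s₀)⁶ + o((t−s₀)⁶). -/
open Filter
open scoped Topology

/-! Along an affinely parametrized curve `x''' = -k x'`, so `y t = ω(x t - x s₀, x' t)` solves
`y'' + k y = 1` with `y s₀ = y' s₀ = 0`. Substituting an expansion of `y` with error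
`o((t - s₀)ⁿ)` into `1 - k y` and integrating twice gives one with error `o((t - s₀)ⁿ⁺²)`, and the
second-order expansion of `k` is enough to carry this from `y = o(1)` up to order six. -/

section Asymptotics

open Asymptotics Polynomial

variable {𝕜 : Type*} [NormedField 𝕜]

theorem isLittleO_sub_pow_succ_of_hasDerivAt {E : Type*} [NormedAddCommGroup E] [NormedSpace ℝ E]
    {f f' : ℝ → E} {a : ℝ} {n : ℕ} (hf : ∀ᶠ t in 𝓝 a, HasDerivAt f (f' t) t)
    (hf' : f' =o[𝓝 a] fun t => (t - a) ^ n) :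
    (fun t => f t - f a) =o[𝓝 a] fun t => (t - a) ^ (n + 1) := by
  obtain ⟨ε, hε, hball⟩ := Metric.eventually_nhds_iff_ball.mp hf
  have hnhds : 𝓝[Metric.ball a ε] a = 𝓝 a := nhdsWithin_eq_nhds.mpr (Metric.ball_mem_nhds a hε)
  have h := (convex_ball a ε).isLittleO_pow_succ_real (Metric.mem_ball_self hε)
    (fun t ht => (hball t ht).hasDerivWithinAt) (hnhds.symm ▸ hf')
  simpa only [hnhds] using h

theorem isLittleO_sub_pow_sub_pow {m n : ℕ} (h : m < n) (a : 𝕜) :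
    (fun t => (t - a) ^ n) =o[𝓝 a] fun t => (t - a) ^ m := by
  simpa only [← norm_pow, isLittleO_norm_left, isLittleO_norm_right] using
    isLittleO_pow_sub_pow_sub a h

theorem tendsto_eval_sub (P : 𝕜[X]) (a : 𝕜) :
    Tendsto (fun t => P.eval (t - a)) (𝓝 a) (𝓝 (P.eval 0)) := by
  simpa only [Function.comp_def, sub_self] using
    (P.continuous.comp (continuous_sub_right a)).tendsto a

theorem isBigO_one_eval_sub (P : 𝕜[X]) (a : 𝕜) :
    (fun t => P.eval (t - a)) =O[𝓝 a] fun _ => (1 : 𝕜) :=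
  (tendsto_eval_sub P a).isBigO_one 𝕜

theorem isLittleO_eval_sub_of_X_pow_succ_dvd {P : 𝕜[X]} {n : ℕ} (h : X ^ (n + 1) ∣ P) (a : 𝕜) :
    (fun t => P.eval (t - a)) =o[𝓝 a] fun t => (t - a) ^ n := by
  obtain ⟨Q, rfl⟩ := h
  simpa using (isLittleO_sub_pow_sub_pow n.lt_succ_self a).mul_isBigO (isBigO_one_eval_sub Q a)

theorem tendsto_eval_zero_of_isLittleO {f : 𝕜 → 𝕜} {P : 𝕜[X]} {a : 𝕜} {n : ℕ}
    (hf : (fun t => f t - P.eval (t - a)) =o[𝓝 a] fun t => (t - a) ^ n) :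
    Tendsto f (𝓝 a) (𝓝 (P.eval 0)) := by
  have hpow : (fun t : 𝕜 => (t - a) ^ n) =O[𝓝 a] fun _ => (1 : 𝕜) := by
    simpa using isBigO_one_eval_sub (X ^ n) a
  have herror := (isLittleO_one_iff 𝕜).mp (hf.trans_isBigO hpow)
  simpa only [sub_add_cancel, zero_add] using herror.add (tendsto_eval_sub P a)

theorem isLittleO_mul_sub_mul {α : Type*} {l : Filter α} {f g p q u v : α → 𝕜}
    (hfp : (fun t => f t - p t) =o[l] u) (hg : g =O[l] v) (hp : p =O[l] fun _ => (1 : 𝕜))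
    (hgq : (fun t => g t - q t) =o[l] fun t => u t * v t) :
    (fun t => f t * g t - p t * q t) =o[l] fun t => u t * v t := by
  have hleft : (fun t => (f t - p t) * g t) =o[l] fun t => u t * v t := hfp.mul_isBigO hg
  have hright : (fun t => p t * (g t - q t)) =o[l] fun t => u t * v t := by
    simpa only [one_mul] using hp.mul_isLittleO hgq
  exact (hleft.add hright).congr_left fun t => by ring

theorem isLittleO_sub_taylor_two {f : ℝ → ℝ} (hf : ContDiff ℝ 2 f) (a : ℝ) :
    (fun t => f t - (C (f a) + C (deriv f a) * X + C (deriv (deriv f) a / 2) * X ^ 2).eval (t - a))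
      =o[𝓝 a] fun t => (t - a) ^ 2 := by
  refine (taylor_isLittleO_univ (n := 2) hf).congr_left fun t => ?_
  simp only [taylor_within_apply, Finset.sum_range_succ, Finset.sum_range_zero,
    iteratedDerivWithin_univ, iteratedDeriv_zero, iteratedDeriv_succ,
    Nat.factorial, smul_eq_mul, eval_add, eval_mul, eval_C, eval_X, eval_pow]
  push_cast
  ring

end Asymptotics

/-- `y` is, near `a`, a solution of Hill's equation with unit forcing, `y'' + k y = 1`, starting
from rest: `y a = y' a = 0`. The derivative of `y` is carried as the explicit function `v`. -/
structure IsUnitForcedHillSolution (k y v : ℝ → ℝ) (a : ℝ) : Prop where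
  hasDerivAt : ∀ᶠ t in 𝓝 a, HasDerivAt y (v t) t
  hasDerivAt_velocity : ∀ᶠ t in 𝓝 a, HasDerivAt v (1 - k t * y t) t
  apply_eq_zero : y a = 0
  velocity_eq_zero : v a = 0

namespace IsUnitForcedHillSolution

open Asymptotics Polynomial

variable {k y v : ℝ → ℝ} {a : ℝ}

theorem isLittleO_one (hy : IsUnitForcedHillSolution k y v a) :
    y =o[𝓝 a] fun _ => (1 : ℝ) := by
  rw [isLittleO_one_iff, ← hy.apply_eq_zero]
  exact hy.hasDerivAt.self_of_nhds.continuousAt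

theorem isLittleO_sub_eval_of_forcing (hy : IsUnitForcedHillSolution k y v a) {P : ℝ[X]} {n : ℕ}
    (hP : P.eval 0 = 0) (hP' : (derivative P).eval 0 = 0)
    (hforcing : (fun t => 1 - k t * y t - (derivative (derivative P)).eval (t - a))
      =o[𝓝 a] fun t => (t - a) ^ n) :
    (fun t => y t - P.eval (t - a)) =o[𝓝 a] fun t => (t - a) ^ (n + 2) := by
  have hvelocity : (fun t => v t - (derivative P).eval (t - a))
      =o[𝓝 a] fun t => (t - a) ^ (n + 1) := by
    have hderiv := hy.hasDerivAt_velocity.mono fun t ht =>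
      ht.fun_sub (((derivative P).hasDerivAt (t - a)).comp_sub_const t a)
    simpa only [hy.velocity_eq_zero, sub_self, hP', sub_zero] using
      isLittleO_sub_pow_succ_of_hasDerivAt hderiv hforcing
  have hderiv := hy.hasDerivAt.mono fun t ht =>
    ht.fun_sub ((P.hasDerivAt (t - a)).comp_sub_const t a)
  simpa only [hy.apply_eq_zero, sub_self, hP, sub_zero] using
    isLittleO_sub_pow_succ_of_hasDerivAt hderiv hvelocity

/-- One step of successive approximation: `Y` is the old expansion, `P` the new one. -/
theorem isLittleO_sub_eval_of_dvd (hy : IsUnitForcedHillSolution k y v a) {K Y P : ℝ[X]}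
    {m n : ℕ} (hK : (fun t => k t - K.eval (t - a)) =o[𝓝 a] fun t => (t - a) ^ m)
    (hyO : y =O[𝓝 a] fun t => (t - a) ^ n)
    (hY : (fun t => y t - Y.eval (t - a)) =o[𝓝 a] fun t => (t - a) ^ (m + n))
    (hP : P.eval 0 = 0) (hP' : (derivative P).eval 0 = 0)
    (hdvd : X ^ (m + n + 1) ∣ derivative (derivative P) - (1 - K * Y)) :
    (fun t => y t - P.eval (t - a)) =o[𝓝 a] fun t => (t - a) ^ (m + n + 2) := by
  refine hy.isLittleO_sub_eval_of_forcing hP hP' ?_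
  have hproduct : (fun t => k t * y t - K.eval (t - a) * Y.eval (t - a))
      =o[𝓝 a] fun t => (t - a) ^ (m + n) := by
    simp only [pow_add] at hY ⊢
    exact isLittleO_mul_sub_mul hK hyO (isBigO_one_eval_sub K a) hY
  refine (hproduct.add (isLittleO_eval_sub_of_X_pow_succ_dvd hdvd a)).neg_left.congr_left
    fun t => ?_
  simp only [eval_sub, eval_one, eval_mul]
  ring

theorem isLittleO_sub_eval_two (hy : IsUnitForcedHillSolution k y v a)
    (hk : k =O[𝓝 a] fun _ => (1 : ℝ)) :
    (fun t => y t - (C (1 / 2 : ℝ) * X ^ 2).eval (t - a)) =o[𝓝 a] fun t => (t - a) ^ 2 := by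
  refine hy.isLittleO_sub_eval_of_forcing (n := 0) (by simp) (by simp) ?_
  have hky : (fun t => k t * y t) =o[𝓝 a] fun t => (t - a) ^ 0 := by
    simpa only [pow_zero, mul_one] using hk.mul_isLittleO hy.isLittleO_one
  refine hky.neg_left.congr_left fun t => ?_
  simp only [derivative_C_mul_X_pow, Nat.reduceSub, eval_mul, eval_C, eval_pow, eval_X]
  ring

theorem isBigO_sq (hy : IsUnitForcedHillSolution k y v a) (hk : k =O[𝓝 a] fun _ => (1 : ℝ)) :
    y =O[𝓝 a] fun t => (t - a) ^ 2 := by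
  have hhalf : (fun t => (C (1 / 2 : ℝ) * X ^ 2).eval (t - a)) =O[𝓝 a] fun t => (t - a) ^ 2 := by
    simpa using (isBigO_refl (fun t : ℝ => (t - a) ^ 2) (𝓝 a)).const_mul_left (1 / 2)
  simpa only [sub_add_cancel] using (hy.isLittleO_sub_eval_two hk).isBigO.add hhalf

theorem isLittleO_sub_eval_four (hy : IsUnitForcedHillSolution k y v a) {k₀ : ℝ}
    (hk : Tendsto k (𝓝 a) (𝓝 k₀)) :
    (fun t => y t - (C (1 / 2) * X ^ 2 - C (k₀ / 24) * X ^ 4).eval (t - a))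
      =o[𝓝 a] fun t => (t - a) ^ 4 := by
  have hkO := hk.isBigO_one ℝ
  have hk_const : (fun t => k t - (C k₀).eval (t - a)) =o[𝓝 a] fun t => (t - a) ^ 0 := by
    simpa only [pow_zero, eval_C, isLittleO_one_iff, tendsto_sub_nhds_zero_iff] using hk
  refine hy.isLittleO_sub_eval_of_dvd (m := 0) (n := 2) hk_const (hy.isBigO_sq hkO)
    (hy.isLittleO_sub_eval_two hkO) (by simp) (by simp) ⟨0, Polynomial.funext fun h => ?_⟩
  simp only [derivative_sub, derivative_C_mul_X_pow, Nat.reduceSub, mul_zero, eval_sub, eval_mul,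
    eval_C, eval_X, eval_pow, eval_one, eval_zero]
  ring

theorem isLittleO_sub_eval_six (hy : IsUnitForcedHillSolution k y v a) {k₀ k₁ k₂ : ℝ}
    (hk : (fun t => k t - (C k₀ + C k₁ * X + C (k₂ / 2) * X ^ 2).eval (t - a))
      =o[𝓝 a] fun t => (t - a) ^ 2) :
    (fun t => y t - (C (1 / 2) * X ^ 2 - C (k₀ / 24) * X ^ 4 - C (k₁ / 40) * X ^ 5 +
        C (k₀ ^ 2 / 720 - k₂ / 120) * X ^ 6).eval (t - a))
      =o[𝓝 a] fun t => (t - a) ^ 6 := by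
  have hk_tendsto : Tendsto k (𝓝 a) (𝓝 k₀) := by
    simpa using tendsto_eval_zero_of_isLittleO hk
  refine hy.isLittleO_sub_eval_of_dvd (m := 2) (n := 2) hk
    (hy.isBigO_sq (hk_tendsto.isBigO_one ℝ)) (hy.isLittleO_sub_eval_four hk_tendsto)
    (by simp) (by simp)
    ⟨-(C (k₀ * k₁ / 24) + C (k₀ * k₂ / 48) * X), Polynomial.funext fun h => ?_⟩
  simp only [derivative_add, derivative_sub, derivative_C_mul_X_pow, Nat.reduceSub, eval_add,
    eval_sub, eval_mul, eval_neg, eval_C, eval_X, eval_pow, eval_one]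
  ring

end IsUnitForcedHillSolution

section AreaForm

theorem hasDerivAt_om {f g : ℝ → ℝ × ℝ} {f' g' : ℝ × ℝ} {t : ℝ} (hf : HasDerivAt f f' t)
    (hg : HasDerivAt g g' t) :
    HasDerivAt (fun s => om (f s) (g s)) (om f' (g t) + om (f t) g') t := by
  have hf₁ : HasDerivAt (fun s => (f s).1) f'.1 t :=
    (ContinuousLinearMap.fst ℝ ℝ ℝ).hasFDerivAt.comp_hasDerivAt t hf
  have hf₂ : HasDerivAt (fun s => (f s).2) f'.2 t :=
    (ContinuousLinearMap.snd ℝ ℝ ℝ).hasFDerivAt.comp_hasDerivAt t hf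
  have hg₁ : HasDerivAt (fun s => (g s).1) g'.1 t :=
    (ContinuousLinearMap.fst ℝ ℝ ℝ).hasFDerivAt.comp_hasDerivAt t hg
  have hg₂ : HasDerivAt (fun s => (g s).2) g'.2 t :=
    (ContinuousLinearMap.snd ℝ ℝ ℝ).hasFDerivAt.comp_hasDerivAt t hg
  refine ((hf₁.mul hg₂).sub (hf₂.mul hg₁)).congr_deriv ?_
  simp only [om]
  ring

theorem contDiff_om {f g : ℝ → ℝ × ℝ} {n : WithTop ℕ∞} (hf : ContDiff ℝ n f)
    (hg : ContDiff ℝ n g) : ContDiff ℝ n fun t => om (f t) (g t) := by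
  unfold om
  fun_prop

theorem om_self (u : ℝ × ℝ) : om u u = 0 := by
  simp only [om]
  ring

theorem om_swap (u v : ℝ × ℝ) : om u v = -om v u := by
  simp only [om]
  ring

theorem om_smul_right (u v : ℝ × ℝ) (c : ℝ) : om u (c • v) = c * om u v := by
  simp only [om, Prod.smul_fst, Prod.smul_snd, smul_eq_mul]
  ring

theorem om_smul_eq_om_smul_add_om_smul (u v w : ℝ × ℝ) : om u v • w = om w v • u + om u w • v := by
  ext <;> simp only [om, Prod.fst_add, Prod.snd_add, Prod.smul_fst, Prod.smul_snd, smul_eq_mul] <;>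
    ring

end AreaForm

section IteratedDeriv

variable {E : Type*} [NormedAddCommGroup E] [NormedSpace ℝ E] {f : ℝ → E}

theorem hasDerivAt_iteratedDeriv {n : ℕ} (hf : ContDiff ℝ (n + 1) f) (t : ℝ) :
    HasDerivAt (iteratedDeriv n f) (iteratedDeriv (n + 1) f t) t := by
  rw [iteratedDeriv_succ]
  exact (hf.differentiable_iteratedDeriv' n t).hasDerivAt

theorem hasDerivAt_deriv_iteratedDeriv_two (hf : ContDiff ℝ 2 f) (t : ℝ) :
    HasDerivAt (deriv f) (iteratedDeriv 2 f t) t := by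
  simpa only [iteratedDeriv_one] using hasDerivAt_iteratedDeriv (n := 1) (mod_cast hf) t

end IteratedDeriv

section AffineArcLength

variable {x : ℝ → ℝ × ℝ}

theorem om_deriv_iteratedDeriv_three_eq_zero (hx : ContDiff ℝ 3 x)
    (haff : ∀ s, om (deriv x s) (iteratedDeriv 2 x s) = 1) (t : ℝ) :
    om (deriv x t) (iteratedDeriv 3 x t) = 0 := by
  have hom := hasDerivAt_om (hasDerivAt_deriv_iteratedDeriv_two (hx.of_le (by norm_num)) t)
    (hasDerivAt_iteratedDeriv (n := 2) (mod_cast hx) t)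
  simp only [haff, om_self, zero_add] at hom
  exact hom.unique (hasDerivAt_const t 1)

theorem iteratedDeriv_three_eq_neg_smul_deriv (hx : ContDiff ℝ 3 x)
    (haff : ∀ s, om (deriv x s) (iteratedDeriv 2 x s) = 1) (t : ℝ) :
    iteratedDeriv 3 x t = -om (iteratedDeriv 2 x t) (iteratedDeriv 3 x t) • deriv x t := by
  have h := om_smul_eq_om_smul_add_om_smul (deriv x t) (iteratedDeriv 2 x t) (iteratedDeriv 3 x t)
  rw [haff, om_deriv_iteratedDeriv_three_eq_zero hx haff, one_smul, zero_smul, add_zero] at h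
  rwa [← om_swap]

theorem isUnitForcedHillSolution_om_sub_deriv (hx : ContDiff ℝ 3 x)
    (haff : ∀ s, om (deriv x s) (iteratedDeriv 2 x s) = 1) (a : ℝ) :
    IsUnitForcedHillSolution (fun t => om (iteratedDeriv 2 x t) (iteratedDeriv 3 x t))
      (fun t => om (x t - x a) (deriv x t)) (fun t => om (x t - x a) (iteratedDeriv 2 x t)) a := by
  have hchord (t : ℝ) : HasDerivAt (fun s => x s - x a) (deriv x t) t :=
    ((hx.differentiable (by norm_num)) t).hasDerivAt.sub_const (x a)
  refine ⟨.of_forall fun t => ?_, .of_forall fun t => ?_, by simp [om], by simp [om]⟩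
  · simpa only [om_self, zero_add] using hasDerivAt_om (hchord t)
      (hasDerivAt_deriv_iteratedDeriv_two (hx.of_le (by norm_num)) t)
  · have hthree : om (x t - x a) (iteratedDeriv 3 x t) =
        -om (iteratedDeriv 2 x t) (iteratedDeriv 3 x t) * om (x t - x a) (deriv x t) :=
      (congrArg _ (iteratedDeriv_three_eq_neg_smul_deriv hx haff t)).trans (om_smul_right _ _ _)
    refine (hasDerivAt_om (hchord t)
      (hasDerivAt_iteratedDeriv (n := 2) (mod_cast hx) t)).congr_deriv ?_
    rw [haff, hthree, neg_mul, ← sub_eq_add_neg]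

theorem contDiff_om_iteratedDeriv_two_three {n : ℕ} (hx : ContDiff ℝ (n + 3 : ℕ) x) :
    ContDiff ℝ n fun t => om (iteratedDeriv 2 x t) (iteratedDeriv 3 x t) := by
  simp only [iteratedDeriv_eq_iterate]
  exact contDiff_om (ContDiff.iterate_deriv' n 2 (hx.of_le (by norm_cast; omega)))
    (ContDiff.iterate_deriv' n 3 hx)

end AffineArcLength

theorem stmt_2_general (x : ℝ → ℝ × ℝ) (hx : ContDiff ℝ 5 x)
    (haff : ∀ s : ℝ, om (deriv x s) (iteratedDeriv 2 x s) = 1)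
    (k : ℝ → ℝ) (hk : ∀ s : ℝ, k s = om (iteratedDeriv 2 x s) (iteratedDeriv 3 x s))
    (s₀ : ℝ) :
    (fun t : ℝ => om (x t - x s₀) (deriv x t) -
        ((t - s₀) ^ 2 / 2 - k s₀ / 24 * (t - s₀) ^ 4 - 3 * deriv k s₀ / 120 * (t - s₀) ^ 5 +
          ((k s₀) ^ 2 / 720 - deriv (deriv k) s₀ / 120) * (t - s₀) ^ 6))
      =o[𝓝 s₀] fun t : ℝ => (t - s₀) ^ 6 := by
  obtain rfl : k = _ := funext hk
  have hsol := isUnitForcedHillSolution_om_sub_deriv (hx.of_le (by norm_num)) haff s₀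
  have hk_taylor := isLittleO_sub_taylor_two (contDiff_om_iteratedDeriv_two_three (n := 2) hx) s₀
  refine (hsol.isLittleO_sub_eval_six hk_taylor).congr_left fun t => ?_
  simp only [Polynomial.eval_add, Polynomial.eval_sub, Polynomial.eval_mul, Polynomial.eval_C,
    Polynomial.eval_pow, Polynomial.eval_X]
  ring

theorem stmt_2 (x : ℝ → ℝ × ℝ) (hx : ContDiff ℝ (⊤ : ℕ∞) x)
    (haff : ∀ s : ℝ, om (deriv x s) (iteratedDeriv 2 x s) = 1)
    (k : ℝ → ℝ) (hk : ∀ s : ℝ, k s = om (iteratedDeriv 2 x s) (iteratedDeriv 3 x s))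
    (s₀ : ℝ) :
    (fun t : ℝ => om (x t - x s₀) (deriv x t) -
        ((t - s₀) ^ 2 / 2 - k s₀ / 24 * (t - s₀) ^ 4 - 3 * deriv k s₀ / 120 * (t - s₀) ^ 5 +
          ((k s₀) ^ 2 / 720 - deriv (deriv k) s₀ / 120) * (t - s₀) ^ 6))
      =o[𝓝 s₀] fun t : ℝ => (t - s₀) ^ 6 :=
  stmt_2_general x (contDiff_infty.mp hx 5) haff k hk s₀
end
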